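/- (Mazur–Orlicz) Let X be a set and let F be a family of pairwise commuting surjective maps from X onto itself. Then there exists a mean I on the space B(X) of all bounded real-valued functions on X such that I(f ∘ h) = I(f) for every f ∈ B(X) and every h ∈ F. Moreover, every closed linear subspace E of B(X) containing the constant function 1 and satisfying f ∘ h ∈ E whenever f ∈ E and h ∈ F admits an F-invariant mean. -/

import Mathlib

open BoundedContinuousFunction MeasureTheory Filter Topology

noncomputable section

/-- The set of bounded real-valued functions on `X`. -/
def Bdd (X : Type*) : Set (X → ℝ) := {f | ∃ C, ∀ x, |f x| ≤ C}

/-- `I` is a mean on the subspace `V` of real-valued functions. -/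
def IsMeanOn {X : Type*} (V : Set (X → ℝ)) (I : (X → ℝ) → ℝ) : Prop :=
  I (fun _ => 1) = 1 ∧
  (∀ f g, f ∈ V → g ∈ V → I (f + g) = I f + I g) ∧
  (∀ (r : ℝ) (f), f ∈ V → I (r • f) = r * I f) ∧
  (∀ f, f ∈ V → (∀ x, 0 ≤ f x) → 0 ≤ I f)

theorem mo_comp {X : Type*} {f : X → ℝ} (hf : f ∈ Bdd X) (h : X → X) : f ∘ h ∈ Bdd X := by
  obtain ⟨C, hC⟩ := hf
  exact ⟨C, fun x => hC (h x)⟩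

theorem mo_add {X : Type*} {f g : X → ℝ} (hf : f ∈ Bdd X) (hg : g ∈ Bdd X) : f + g ∈ Bdd X := by
  obtain ⟨C, hC⟩ := hf
  obtain ⟨D, hD⟩ := hg
  exact ⟨C + D, fun x => (abs_add_le _ _).trans (add_le_add (hC x) (hD x))⟩

theorem mo_smul {X : Type*} {f : X → ℝ} (r : ℝ) (hf : f ∈ Bdd X) : r • f ∈ Bdd X := by
  obtain ⟨C, hC⟩ := hf
  refine ⟨|r| * C, fun x => ?_⟩
  rw [Pi.smul_apply, smul_eq_mul, abs_mul]
  exact mul_le_mul_of_nonneg_left (hC x) (abs_nonneg r)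

theorem mo_one {X : Type*} : (fun _ => (1 : ℝ)) ∈ Bdd X := ⟨1, fun _ => by simp⟩

theorem mo_bound {X : Type*} {I : (X → ℝ) → ℝ} (hI : IsMeanOn (Bdd X) I) {f : X → ℝ} {C : ℝ}
    (hC : ∀ x, |f x| ≤ C) : I f ∈ Set.Icc (-C) C := by
  obtain ⟨h1, hadd, hsm, hpos⟩ := hI
  have hf : f ∈ Bdd X := ⟨C, hC⟩
  have hc : C • (fun _ : X => (1 : ℝ)) ∈ Bdd X := mo_smul C mo_one
  have hn : (-1 : ℝ) • f ∈ Bdd X := mo_smul _ hf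
  have e1 := hpos _ (mo_add hc hf) (fun x => by
    have := abs_le.1 (hC x)
    simp only [Pi.add_apply, Pi.smul_apply, smul_eq_mul]; linarith [this.1])
  have e2 := hpos _ (mo_add hc hn) (fun x => by
    have := abs_le.1 (hC x)
    simp only [Pi.add_apply, Pi.smul_apply, smul_eq_mul]; linarith [this.2])
  rw [hadd _ _ hc hf, hsm _ _ mo_one, h1] at e1
  rw [hadd _ _ hc hn, hsm _ _ mo_one, h1, hsm _ _ hf] at e2
  constructor <;> linarith

theorem mo_lim {X ι : Type*} (U : Ultrafilter ι) (J : ι → (X → ℝ) → ℝ)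
    (hJ : ∀ i, IsMeanOn (Bdd X) (J i)) :
    ∃ I : (X → ℝ) → ℝ, IsMeanOn (Bdd X) I ∧
      ∀ f ∈ Bdd X, Tendsto (fun i => J i f) U (𝓝 (I f)) := by
  have key : ∀ f : X → ℝ, ∃ a : ℝ, f ∈ Bdd X → Tendsto (fun i => J i f) U (𝓝 a) := by
    intro f
    by_cases hf : f ∈ Bdd X
    · obtain ⟨C, hC⟩ := hf
      have hc : IsCompact (Set.Icc (-C) C) := isCompact_Icc
      obtain ⟨a, -, ha⟩ := hc.ultrafilter_le_nhds (U.map (fun i => J i f))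
        (by
          rw [le_principal_iff]
          exact Ultrafilter.mem_map.2 (Filter.univ_mem' (fun i => mo_bound (hJ i) hC)))
      exact ⟨a, fun _ => ha⟩
    · exact ⟨0, fun h => absurd h hf⟩
  choose I hI using key
  refine ⟨I, ⟨?_, ?_, ?_, ?_⟩, hI⟩
  · refine tendsto_nhds_unique (hI _ mo_one) ?_
    simp only [(hJ _).1]
    exact tendsto_const_nhds
  · intro f g hf hg
    refine tendsto_nhds_unique (hI _ (mo_add hf hg)) ?_
    simp only [(hJ _).2.1 f g hf hg]
    exact (hI f hf).add (hI g hg)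
  · intro r f hf
    refine tendsto_nhds_unique (hI _ (mo_smul r hf)) ?_
    simp only [(hJ _).2.2.1 r f hf]
    exact (hI f hf).const_mul r
  · intro f hf h0
    exact ge_of_tendsto' (hI f hf) (fun i => (hJ i).2.2.2 f hf h0)

theorem mo_avg {X : Type*} {I : (X → ℝ) → ℝ} (hI : IsMeanOn (Bdd X) I) (h : X → X) (n : ℕ) :
    IsMeanOn (Bdd X) (fun f => (∑ k ∈ Finset.range (n + 1), I (f ∘ h^[k])) / ((n : ℝ) + 1)) := by
  have hn : (n : ℝ) + 1 ≠ 0 := by positivity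
  obtain ⟨h1, hadd, hsm, hpos⟩ := hI
  refine ⟨?_, ?_, ?_, ?_⟩
  · have : ∀ k, I ((fun _ : X => (1 : ℝ)) ∘ h^[k]) = 1 := fun k => h1
    simp only [this]
    simp [hn]
  · intro f g hf hg
    have : ∀ k, I ((f + g) ∘ h^[k]) = I (f ∘ h^[k]) + I (g ∘ h^[k]) := fun k =>
      hadd _ _ (mo_comp hf _) (mo_comp hg _)
    simp only [this, Finset.sum_add_distrib, add_div]
  · intro r f hf
    have : ∀ k, I ((r • f) ∘ h^[k]) = r * I (f ∘ h^[k]) := fun k =>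
      hsm r _ (mo_comp hf _)
    simp only [this, ← Finset.mul_sum, mul_div_assoc]
  · intro f hf h0
    refine div_nonneg (Finset.sum_nonneg fun k _ => hpos _ (mo_comp hf _) fun x => h0 _) ?_
    positivity

theorem mo_step {X : Type*} {I : (X → ℝ) → ℝ} (hI : IsMeanOn (Bdd X) I) (S : Set (X → X))
    (hS : ∀ f ∈ Bdd X, ∀ g ∈ S, I (f ∘ g) = I f) (h : X → X)
    (hc : ∀ g ∈ S, Function.Commute g h) :
    ∃ J : (X → ℝ) → ℝ, IsMeanOn (Bdd X) J ∧ (∀ f ∈ Bdd X, J (f ∘ h) = J f) ∧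
      ∀ f ∈ Bdd X, ∀ g ∈ S, J (f ∘ g) = J f := by
  obtain ⟨J, hJ, hlim⟩ := mo_lim (Ultrafilter.of (atTop : Filter ℕ)) _ (mo_avg hI h)
  refine ⟨J, hJ, ?_, ?_⟩
  · intro f hf
    have h1 := (hlim _ (mo_comp hf h)).sub (hlim f hf)
    have h2 : Tendsto (fun n : ℕ => (I (f ∘ h^[n + 1]) - I f) / ((n : ℝ) + 1)) atTop (𝓝 0) := by
      obtain ⟨C, hC⟩ := hf
      have hlim0 : Tendsto (fun n : ℕ => (2 * C) * (1 / ((n : ℝ) + 1))) atTop (𝓝 0) := by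
        simpa using (tendsto_one_div_add_atTop_nhds_zero_nat (𝕜 := ℝ)).const_mul (2 * C)
      refine squeeze_zero_norm (fun n => ?_) hlim0
      have hb1 := mo_bound hI (f := f ∘ h^[n + 1]) (C := C) (fun x => hC _)
      have hb2 := mo_bound hI hC
      have hp : (0 : ℝ) < (n : ℝ) + 1 := by positivity
      rw [Real.norm_eq_abs, abs_div, abs_of_pos hp, mul_one_div]
      refine div_le_div_of_nonneg_right ?_ hp.le
      rw [abs_le]
      constructor <;> linarith [hb1.1, hb1.2, hb2.1, hb2.2]
    have h3 := h2.mono_left (Ultrafilter.of_le (atTop : Filter ℕ))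
    have h4 := tendsto_nhds_unique (h1.congr fun n => ?_) h3
    · linarith
    · rw [← sub_div]
      congr 1
      have : ∀ k, (f ∘ h) ∘ h^[k] = f ∘ h^[k + 1] := fun k => by
        rw [Function.iterate_succ', Function.comp_assoc]
      simp only [this]
      rw [← Finset.sum_sub_distrib, Finset.sum_range_sub (fun k => I (f ∘ h^[k]))]
      simp
  · intro f hf g hg
    refine tendsto_nhds_unique (hlim _ (mo_comp hf g)) ((hlim f hf).congr fun n => ?_)
    congr 1
    refine Finset.sum_congr rfl fun k _ => ?_
    have : (f ∘ g) ∘ h^[k] = (f ∘ h^[k]) ∘ g := by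
      rw [Function.comp_assoc, Function.comp_assoc, ((hc g hg).iterate_right k).comp_eq]
    rw [this, hS _ (mo_comp hf _) g hg]

theorem mo_main {X : Type*} [Nonempty X] (F : Set (X → X))
    (hcomm : ∀ h ∈ F, ∀ h' ∈ F, h ∘ h' = h' ∘ h) :
    ∃ I : (X → ℝ) → ℝ, IsMeanOn (Bdd X) I ∧ ∀ f ∈ Bdd X, ∀ h ∈ F, I (f ∘ h) = I f := by
  classical
  have fin : ∀ S : Finset F, ∃ I : (X → ℝ) → ℝ, IsMeanOn (Bdd X) I ∧
      ∀ f ∈ Bdd X, ∀ h ∈ S, I (f ∘ h.1) = I f := by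
    intro S
    induction S using Finset.induction_on with
    | empty =>
      obtain ⟨x⟩ := ‹Nonempty X›
      exact ⟨fun f => f x, ⟨rfl, fun _ _ _ _ => rfl, fun _ _ _ => rfl, fun f _ h => h x⟩,
        by simp⟩
    | insert a S _ ih =>
      obtain ⟨I, hI, hS⟩ := ih
      obtain ⟨J, hJ, ha, hJS⟩ := mo_step hI {g | ∃ s ∈ S, s.1 = g}
        (by rintro f hf g ⟨s, hs, rfl⟩; exact hS f hf s hs) a.1
        (by rintro g ⟨s, hs, rfl⟩; exact congrFun (hcomm s.1 s.2 a.1 a.2))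
      refine ⟨J, hJ, fun f hf h hh => ?_⟩
      rcases Finset.mem_insert.1 hh with rfl | hh
      · exact ha f hf
      · exact hJS f hf _ ⟨h, hh, rfl⟩
  choose J hJ hinv using fin
  obtain ⟨I, hI, hlim⟩ := mo_lim (Ultrafilter.of (atTop : Filter (Finset F))) J hJ
  refine ⟨I, hI, fun f hf h hh => ?_⟩
  refine tendsto_nhds_unique (hlim _ (mo_comp hf h)) ((hlim f hf).congr' ?_)
  refine (Ultrafilter.of_le (atTop : Filter (Finset F))) ?_
  filter_upwards [eventually_ge_atTop ({⟨h, hh⟩} : Finset F)] with S hS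
  exact (hinv S f hf ⟨h, hh⟩ (hS (Finset.mem_singleton_self _))).symm

/-- Corollary 4.13 (Mazur–Orlicz): a family of commuting surjections of a set `X` admits an
invariant mean on `B(X)`, and indeed on every invariant closed linear subspace of `B(X)`
containing the constants. -/
theorem mazur_orlicz
    {X : Type*} [Nonempty X] (F : Set (X → X))
    (hsurj : ∀ h ∈ F, Function.Surjective h)
    (hcomm : ∀ h ∈ F, ∀ h' ∈ F, h ∘ h' = h' ∘ h) :
    (∃ I : (X → ℝ) → ℝ, IsMeanOn (Bdd X) I ∧
        ∀ f ∈ Bdd X, ∀ h ∈ F, I (f ∘ h) = I f) ∧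
      ∀ E : Submodule ℝ (X → ℝ), (E : Set (X → ℝ)) ⊆ Bdd X →
        (fun _ => (1 : ℝ)) ∈ E →
        (∀ f ∈ Bdd X, (∀ ε > 0, ∃ g ∈ E, ∀ x, |f x - g x| ≤ ε) → f ∈ E) →
        (∀ f ∈ E, ∀ h ∈ F, f ∘ h ∈ E) →
        ∃ J : (X → ℝ) → ℝ, IsMeanOn (E : Set (X → ℝ)) J ∧
          ∀ f ∈ (E : Set (X → ℝ)), ∀ h ∈ F, J (f ∘ h) = J f := by
  obtain ⟨I, hI, hinv⟩ := mo_main F hcomm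
  refine ⟨⟨I, hI, hinv⟩, fun E hE _ _ _ => ⟨I, ⟨hI.1, ?_, ?_, ?_⟩, ?_⟩⟩
  · exact fun f g hf hg => hI.2.1 f g (hE hf) (hE hg)
  · exact fun r f hf => hI.2.2.1 r f (hE hf)
  · exact fun f hf => hI.2.2.2 f (hE hf)
  · exact fun f hf => hinv f (hE hf)
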